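/- Let P be an orthogonal projection, T a self-adjoint involution (T² = I, T* = T), and U = (2P - I)T on a finite-dimensional complex inner product space. Write P = M M* where M has full column rank, and set ψ = M* T M. If z is an eigenvector of ψ with eigenvalue 1, then y = Mz satisfies U y = y. -/

import Mathlib

open Matrix

/-! For contractions `A` and `B`, `B† A z = z` forces `⟪A z, B z⟫ = ‖z‖²`, which is the equality
case of Cauchy–Schwarz, so `A z = B z`. With `A = T M` and `B = M` this reads `T y = y` for
`y = M z`; substituting it back into `M† T M z = z` gives `M† y = z`, that is, `P y = y`.
Both `T` and `M` are contractions because `T† T` and `M M†` are orthogonal projections. -/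

section Hilbert

open scoped InnerProduct InnerProductSpace

variable {𝕜 E F : Type*} [RCLike 𝕜]
  [NormedAddCommGroup E] [InnerProductSpace 𝕜 E] [CompleteSpace E]
  [NormedAddCommGroup F] [InnerProductSpace 𝕜 F] [CompleteSpace F]

theorem apply_eq_apply_of_adjoint_apply_eq_self {A B : F →L[𝕜] E} (hA : ‖A‖ ≤ 1) (hB : ‖B‖ ≤ 1)
    {z : F} (hz : (B†) (A z) = z) : A z = B z := by
  have inner_eq : RCLike.re ⟪A z, B z⟫_𝕜 = ‖z‖ ^ 2 := by
    rw [← ContinuousLinearMap.adjoint_inner_left, hz, inner_self_eq_norm_sq]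
  have hAz : ‖A z‖ ^ 2 ≤ ‖z‖ ^ 2 := by gcongr; simpa using A.le_of_opNorm_le hA z
  have hBz : ‖B z‖ ^ 2 ≤ ‖z‖ ^ 2 := by gcongr; simpa using B.le_of_opNorm_le hB z
  have dist_sq : ‖A z - B z‖ ^ 2 ≤ 0 := by
    rw [norm_sub_sq (𝕜 := 𝕜), inner_eq]
    linarith
  simpa [sub_eq_zero] using dist_sq

theorem stmt_3_general {T : E →L[𝕜] E} {M : F →L[𝕜] E} (hT : ‖T‖ ≤ 1) (hM : ‖M‖ ≤ 1)
    {z : F} (hz : (M†) (T (M z)) = z) :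
    ((2 • (M ∘L M†) - 1) ∘L T) (M z) = M z := by
  have hTM : ‖T ∘L M‖ ≤ 1 :=
    (T.opNorm_comp_le M).trans (mul_le_one₀ hT (norm_nonneg M) hM)
  have hTMz : T (M z) = M z := apply_eq_apply_of_adjoint_apply_eq_self hTM hM hz
  have hMMz : (M†) (M z) = z := by rwa [hTMz] at hz
  simp [hTMz, hMMz, two_smul]

end Hilbert

section Matrix

open scoped Matrix.Norms.L2Operator

variable {𝕜 m n : Type*} [RCLike 𝕜] [Fintype m] [Fintype n] [DecidableEq n]

theorem l2_opNorm_le_one_of_isIdempotentElem_conjTranspose_mul_self {A : Matrix m n 𝕜}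
    (hA : IsIdempotentElem (Aᴴ * A)) : ‖A‖ ≤ 1 := by
  have hproj : IsStarProjection (Aᴴ * A) := ⟨hA, isHermitian_conjTranspose_mul_self A⟩
  rw [← abs_norm, ← sq_le_one_iff_abs_le_one, sq, ← l2_opNorm_conjTranspose_mul_self]
  exact hproj.norm_le

theorem l2_opNorm_le_one_of_isIdempotentElem_mul_conjTranspose_self {A : Matrix m n 𝕜}
    (hA : IsIdempotentElem (A * Aᴴ)) : ‖A‖ ≤ 1 := by
  classical
  rw [← l2_opNorm_conjTranspose]
  apply l2_opNorm_le_one_of_isIdempotentElem_conjTranspose_mul_self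
  rwa [conjTranspose_conjTranspose]

theorem two_smul_sub_one_mul_mulVec_eq_self [DecidableEq m]
    {T : Matrix m m 𝕜} {M : Matrix m n 𝕜} (hT : ‖T‖ ≤ 1) (hM : ‖M‖ ≤ 1)
    {z : n → 𝕜} (hz : (Mᴴ * T * M) *ᵥ z = z) :
    ((2 • (M * Mᴴ) - 1) * T) *ᵥ (M *ᵥ z) = M *ᵥ z := by
  let M' := M.toEuclideanLin.toContinuousLinearMap
  have adjoint_apply (x : m → 𝕜) : M'.adjoint (WithLp.toLp 2 x) = WithLp.toLp 2 (Mᴴ *ᵥ x) := by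
    rw [← LinearMap.adjoint_toContinuousLinearMap, ← toEuclideanLin_conjTranspose_eq_adjoint]
    rfl
  have hz' : M'.adjoint (toEuclideanCLM (𝕜 := 𝕜) T (M' (WithLp.toLp 2 z))) = WithLp.toLp 2 z := by
    simpa [M', adjoint_apply, mulVec_mulVec, Matrix.mul_assoc] using hz
  have fixed := congrArg WithLp.ofLp (stmt_3_general (M := M') hT hM hz')
  simpa [M', adjoint_apply, ← mulVec_mulVec, two_smul, sub_mulVec, add_mulVec] using fixed

end Matrix

theorem stmt_3 {m r : ℕ} (P T : Matrix (Fin m) (Fin m) ℂ) (M : Matrix (Fin m) (Fin r) ℂ)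
    (hP : P * P = P) (hPh : Pᴴ = P)
    (hT : T * T = 1) (hTh : Tᴴ = T)
    (hPM : P = M * Mᴴ) (hM : Function.Injective M.mulVec)
    (z : Fin r → ℂ) (hz : z ≠ 0) (hψ : (Mᴴ * T * M).mulVec z = z) :
    ((2 • P - 1) * T).mulVec (M.mulVec z) = M.mulVec z := by
  subst hPM
  have hTT : IsIdempotentElem (Tᴴ * T) := by rw [hTh, hT]; exact .one
  exact two_smul_sub_one_mul_mulVec_eq_self
    (l2_opNorm_le_one_of_isIdempotentElem_conjTranspose_mul_self hTT)
    (l2_opNorm_le_one_of_isIdempotentElem_mul_conjTranspose_self hP) hψ
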